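/- arXiv:1111.1041 — 2 statements merged into one kernel-verified Lean document; each statement's English description precedes it below -/
import Mathlib

section
/- Let B ≥ 1 and let X_B be a chi-square random variable with B degrees of freedom. Define h(τ²) = τ / E[(√X_B − τ)·1{X_B ≥ τ²}] and g(τ²) = τ·E[(√X_B − τ)²·1{X_B ≥ τ²}] / E[(√X_B − τ)·1{X_B ≥ τ²}]. Then for every τ ∈ [0,∞), setting ε = 1/(1 + h(τ²)), the minimax MSE of block soft thresholding satisfies M_B(ε|BlockSoft) = (B + τ² + g(τ²)) / (B(1 + h(τ²))). -/
open MeasureTheory ProbabilityTheory ENNReal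

noncomputable section

/-- The standard Gaussian measure `N(0, I_B)` on `ℝ^B`. -/
def stdGaussian (B : ℕ) : Measure (Fin B → ℝ) :=
  Measure.pi fun _ => gaussianReal 0 1

/-- Block soft thresholding `η^soft(y;τ) = (1 - τ/‖y‖₂)₊ · y` on `ℝ^B`
(with `η^soft(0;τ) = 0`). -/
def blockSoft (B : ℕ) (τ : ℝ) (y : Fin B → ℝ) : Fin B → ℝ :=
  (max (1 - τ / Real.sqrt (∑ i, (y i) ^ 2)) 0) • y

/-- The class `F_{ε,B}` of Borel probability measures `ν` on `ℝ^B` with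
`ν({0}) ≥ 1 - ε`. -/
def sparseClass (B : ℕ) (ε : ℝ) : Set (Measure (Fin B → ℝ)) :=
  {ν | IsProbabilityMeasure ν ∧ ENNReal.ofReal (1 - ε) ≤ ν {0}}

/-- The minimax MSE of block soft thresholding,
`M_B(ε|BlockSoft) = (1/B) inf_{τ ≥ 0} sup_{ν ∈ F_{ε,B}} E ‖X - η^soft(X+Z;τ)‖₂²`,
with `X ∼ ν` and `Z ∼ N(0,I_B)` independent. -/
def MBlockSoft (B : ℕ) (ε : ℝ) : ℝ≥0∞ :=
  (B : ℝ≥0∞)⁻¹ *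
    ⨅ (τ : ℝ) (_ : 0 ≤ τ), ⨆ ν ∈ sparseClass B ε,
      ∫⁻ p, ENNReal.ofReal (∑ i, (p.1 i - blockSoft B τ (p.1 + p.2) i) ^ 2)
        ∂(ν.prod (stdGaussian B))

/-- `E[(√X_B − τ)·1{X_B ≥ τ²}]`, with `X_B = ‖Z‖₂²` a chi-square with `B`
degrees of freedom. -/
def Eind1 (B : ℕ) (τ : ℝ) : ℝ :=
  ∫ z, (if τ ^ 2 ≤ ∑ i, (z i) ^ 2 then Real.sqrt (∑ i, (z i) ^ 2) - τ else 0)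
    ∂(stdGaussian B)

/-- `E[(√X_B − τ)²·1{X_B ≥ τ²}]`, with `X_B` a chi-square with `B` degrees of
freedom. -/
def Eind2 (B : ℕ) (τ : ℝ) : ℝ :=
  ∫ z, (if τ ^ 2 ≤ ∑ i, (z i) ^ 2 then (Real.sqrt (∑ i, (z i) ^ 2) - τ) ^ 2 else 0)
    ∂(stdGaussian B)

/-- `h(τ²) = τ / E[(√X_B − τ)·1{X_B ≥ τ²}]`. -/
def hfun (B : ℕ) (τ : ℝ) : ℝ := τ / Eind1 B τ

/-- `g(τ²) = τ·E[(√X_B − τ)²·1{X_B ≥ τ²}] / E[(√X_B − τ)·1{X_B ≥ τ²}]`. -/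
def gfun (B : ℕ) (τ : ℝ) : ℝ := τ * Eind2 B τ / Eind1 B τ

/-! Soft thresholding at level `r` subtracts from `y` its radial retraction `P y` onto the ball of
radius `r`, so its error at the signal `m` with noise `Z` is `P (m + Z) - Z`. Monotonicity of `P`
gives `‖P (m + Z) - Z‖² ≤ ‖Z‖² + r² - 2⟨P m, Z⟩`; hence for centred noise the risk at `m` is at most
`E‖Z‖² + r²`, a value approached as `‖m‖ → ∞`, while the risk at `0` is `E(‖Z‖ - r)₊²`. A least
favourable sparse prior therefore sends its mass `ε` to infinity, and the worst-case risk is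
`(1 - ε) E(‖Z‖ - r)₊² + ε (E‖Z‖² + r²)`. This is convex in `r`, with the stationarity condition
`(1 - ε) E(‖Z‖ - τ)₊ = ε τ`, that is `ε = 1 / (1 + h(τ²))`. The noise law enters only through its
mean and the radial moments `E‖Z‖²`, `E(‖Z‖ - τ)₊` and `E(‖Z‖ - τ)₊²`. -/

section RadialMaps

open Filter Topology

variable {E : Type*} [NormedAddCommGroup E]

section NormedSpace

variable [NormedSpace ℝ E]

/-- Soft thresholding `y ↦ (1 - r / ‖y‖)₊ • y` on a normed space; as `y = 0` is sent to `0` whatever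
the coefficient, the convention `r / 0 = 0` is harmless. -/
def softThreshold (r : ℝ) (y : E) : E := max (1 - r / ‖y‖) 0 • y

/-- The radial retraction of a normed space onto its closed ball of radius `r`, which soft
thresholding subtracts from the identity. In an inner product space it is the metric projection. -/
def ballRetraction (r : ℝ) (y : E) : E := min 1 (r / ‖y‖) • y

lemma sub_softThreshold (r : ℝ) (y : E) : y - softThreshold r y = ballRetraction r y := by
  have hcoeff : max (1 - r / ‖y‖) 0 = 1 - min 1 (r / ‖y‖) := by
    rw [min_comm, ← max_sub_sub_left, sub_self]
  rw [softThreshold, ballRetraction, hcoeff, sub_smul, one_smul, sub_sub_self]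

lemma sub_softThreshold_add (r : ℝ) (m z : E) :
    m - softThreshold r (m + z) = ballRetraction r (m + z) - z := by
  rw [← sub_softThreshold]; abel

lemma norm_softThreshold {r : ℝ} (hr : 0 ≤ r) (y : E) :
    ‖softThreshold r y‖ = max (‖y‖ - r) 0 := by
  rcases eq_or_ne y 0 with rfl | hy
  · simp [softThreshold, hr]
  · rw [softThreshold, norm_smul, Real.norm_of_nonneg (le_max_right _ _),
      max_mul_of_nonneg _ _ (norm_nonneg y), sub_mul, one_mul, zero_mul,
      div_mul_cancel₀ r (norm_ne_zero_iff.2 hy)]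

lemma norm_ballRetraction {r : ℝ} (hr : 0 ≤ r) (y : E) : ‖ballRetraction r y‖ = min ‖y‖ r := by
  rcases eq_or_ne y 0 with rfl | hy
  · simp [ballRetraction, hr]
  · rw [ballRetraction, norm_smul, Real.norm_of_nonneg (by positivity),
      min_mul_of_nonneg _ _ (norm_nonneg y), one_mul, div_mul_cancel₀ r (norm_ne_zero_iff.2 hy)]

lemma ballRetraction_of_le_norm {r : ℝ} {y : E} (h : r ≤ ‖y‖) :
    ballRetraction r y = (r / ‖y‖) • y := by
  rw [ballRetraction, min_eq_right (div_le_one_of_le₀ h (norm_nonneg y))]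

lemma tendsto_ballRetraction_smul_add_atTop (r : ℝ) {u : E} (hu : u ≠ 0) (z : E) :
    Tendsto (fun t : ℝ => ballRetraction r (t • u + z)) atTop (𝓝 ((r / ‖u‖) • u)) := by
  have hdir : Tendsto (fun t : ℝ => u + t⁻¹ • z) atTop (𝓝 u) := by
    simpa using ((tendsto_inv_atTop_zero (𝕜 := ℝ)).smul_const z).const_add u
  have hnorm : Tendsto (fun t : ℝ => t * ‖u + t⁻¹ • z‖) atTop atTop :=
    tendsto_id.atTop_mul_pos (norm_pos_iff.2 hu) hdir.norm
  have hlim : Tendsto (fun t : ℝ => (r / ‖u + t⁻¹ • z‖) • (u + t⁻¹ • z)) atTop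
      (𝓝 ((r / ‖u‖) • u)) :=
    (tendsto_const_nhds.div hdir.norm (norm_ne_zero_iff.2 hu)).smul hdir
  refine hlim.congr' ?_
  filter_upwards [eventually_gt_atTop 0, hnorm.eventually_ge_atTop r] with t ht hrt
  have hsmul : t • u + z = t • (u + t⁻¹ • z) := by rw [smul_add, smul_inv_smul₀ ht.ne']
  have hnorm_smul : ‖t • u + z‖ = t * ‖u + t⁻¹ • z‖ := by
    rw [hsmul, norm_smul, Real.norm_of_nonneg ht.le]
  rw [ballRetraction_of_le_norm (hnorm_smul ▸ hrt), hnorm_smul, hsmul, smul_smul]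
  congr 1
  field_simp

variable [MeasurableSpace E] [BorelSpace E]

@[fun_prop]
lemma measurable_softThreshold [SecondCountableTopology E] (r : ℝ) :
    Measurable (softThreshold r : E → E) := by
  unfold softThreshold; fun_prop

end NormedSpace

variable [InnerProductSpace ℝ E]

lemma inner_ballRetraction_sub_nonneg {r : ℝ} (hr : 0 ≤ r) (x y : E) :
    0 ≤ inner ℝ (ballRetraction r x - ballRetraction r y) (x - y) := by
  set a := min 1 (r / ‖x‖) with ha
  set b := min 1 (r / ‖y‖) with hb
  have ha₀ : 0 ≤ a := by positivity
  have hb₀ : 0 ≤ b := by positivity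
  have hax : a * ‖x‖ = min ‖x‖ r := by
    rw [← norm_ballRetraction hr, ballRetraction, norm_smul, Real.norm_of_nonneg ha₀]
  have hby : b * ‖y‖ = min ‖y‖ r := by
    rw [← norm_ballRetraction hr, ballRetraction, norm_smul, Real.norm_of_nonneg hb₀]
  have hradial : 0 ≤ (a * ‖x‖ - b * ‖y‖) * (‖x‖ - ‖y‖) := by
    rw [hax, hby]
    rcases le_total ‖x‖ ‖y‖ with h | h
    · exact mul_nonneg_of_nonpos_of_nonpos (sub_nonpos.2 (min_le_min_right r h)) (sub_nonpos.2 h)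
    · exact mul_nonneg (sub_nonneg.2 (min_le_min_right r h)) (sub_nonneg.2 h)
  calc 0 ≤ (a * ‖x‖ - b * ‖y‖) * (‖x‖ - ‖y‖) := hradial
    _ = a * ‖x‖ ^ 2 + b * ‖y‖ ^ 2 - (a + b) * (‖x‖ * ‖y‖) := by ring
    _ ≤ a * ‖x‖ ^ 2 + b * ‖y‖ ^ 2 - (a + b) * inner ℝ x y := by
      gcongr; exact real_inner_le_norm x y
    _ = inner ℝ (ballRetraction r x - ballRetraction r y) (x - y) := by
      simp only [ballRetraction, ← ha, ← hb, inner_sub_left, inner_sub_right,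
        real_inner_smul_left, real_inner_self_eq_norm_sq, real_inner_comm x y]
      ring

lemma norm_sub_softThreshold_add_sq_le {r : ℝ} (hr : 0 ≤ r) (m z : E) :
    ‖m - softThreshold r (m + z)‖ ^ 2 ≤ ‖z‖ ^ 2 + r ^ 2 - 2 * inner ℝ (ballRetraction r m) z := by
  have hnorm : ‖ballRetraction r (m + z)‖ ^ 2 ≤ r ^ 2 := by
    gcongr; exact (norm_ballRetraction hr _).trans_le (min_le_right _ _)
  have hmono := inner_ballRetraction_sub_nonneg hr (m + z) m
  rw [add_sub_cancel_left, inner_sub_left] at hmono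
  rw [sub_softThreshold_add, norm_sub_sq_real]
  linarith

end RadialMaps

section ExcessMoment

variable {E : Type*} [NormedAddCommGroup E] [MeasurableSpace E] {μ : Measure E}

/-- The `k`-th moment of the excess `(‖Z‖ - r)₊` of a random vector `Z ∼ μ` over the level `r`. -/
def excessMoment (k : ℕ) (r : ℝ) (μ : Measure E) : ℝ := ∫ z, max (‖z‖ - r) 0 ^ k ∂μ

lemma memLp_excess [IsFiniteMeasure μ] {p : ℝ≥0∞} (hμ : MemLp id p μ) (r : ℝ) :
    MemLp (fun z => max (‖z‖ - r) 0) p μ :=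
  (hμ.norm.sub (memLp_const r)).pos_part

-- The left side is the tangent at `τ` of the convex function `σ ↦ E (‖Z‖ - σ)₊ ^ 2`.
lemma excessMoment_two_tangent_le [IsFiniteMeasure μ] (hμ : MemLp id 2 μ) (τ σ : ℝ) :
    excessMoment 2 τ μ - 2 * (σ - τ) * excessMoment 1 τ μ ≤ excessMoment 2 σ μ := by
  have hpointwise (x : ℝ) :
      max (x - τ) 0 ^ 2 - 2 * (σ - τ) * max (x - τ) 0 ≤ max (x - σ) 0 ^ 2 := by
    rcases max_cases (x - τ) 0 with ⟨h, _⟩ | ⟨h, _⟩ <;> rw [h] <;>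
      nlinarith [sq_nonneg (max (x - σ) 0 - (x - τ)), le_max_left (x - σ) 0]
  have hint₂ := (memLp_excess hμ τ).integrable_sq
  have hint₁ := ((memLp_excess hμ τ).integrable one_le_two).const_mul (2 * (σ - τ))
  simp only [excessMoment, pow_one]
  rw [← integral_const_mul, ← integral_sub hint₂ hint₁]
  exact integral_mono (hint₂.sub hint₁) (memLp_excess hμ σ).integrable_sq fun z => hpointwise ‖z‖

lemma nontrivial_of_excessMoment_pos {k : ℕ} (hk : k ≠ 0) {r : ℝ} (hr : 0 ≤ r)
    (h : 0 < excessMoment k r μ) : Nontrivial E := by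
  by_contra htriv
  rw [not_nontrivial_iff_subsingleton] at htriv
  have hzero (z : E) : max (‖z‖ - r) 0 = 0 := by simp [Subsingleton.elim z 0, hr]
  simp [excessMoment, hzero, hk] at h

lemma excessMoment_one_pos [NormedSpace ℝ E] [Nontrivial E] [μ.IsOpenPosMeasure]
    [IsFiniteMeasure μ] (hμ : Integrable id μ) (r : ℝ) : 0 < excessMoment 1 r μ := by
  obtain ⟨x, hx⟩ := NormedSpace.exists_lt_norm ℝ E r
  simp only [excessMoment, pow_one]
  refine integral_pos_of_integrable_nonneg_nonzero (x := x) (by fun_prop)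
    (memLp_one_iff_integrable.1 (memLp_excess (memLp_one_iff_integrable.2 hμ) r))
    (fun z => le_max_right _ _) ?_
  exact (lt_max_of_lt_left (sub_pos.2 hx)).ne'

end ExcessMoment

section Contamination

variable {α : Type*} [MeasurableSpace α]

-- A probability measure with an atom of mass at least `p` at `a` is a mixture `p • δ_a + ν'`.
lemma iSup_lintegral_of_le_measure_singleton {p : ℝ≥0∞} (hp : p ≤ 1) (a : α) {f : α → ℝ≥0∞}
    (hf : Measurable f) :
    ⨆ ν ∈ {ν : Measure α | IsProbabilityMeasure ν ∧ p ≤ ν {a}}, ∫⁻ x, f x ∂ν =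
      p * f a + (1 - p) * ⨆ x, f x := by
  have hp_top : p ≠ ∞ := ne_top_of_le_ne_top one_ne_top hp
  apply le_antisymm
  · refine iSup₂_le fun ν ⟨_, hν⟩ => ?_
    have hatom : p • Measure.dirac a ≤ ν := by
      refine Measure.le_iff.2 fun s hs => ?_
      by_cases ha : a ∈ s
      · simpa [ha, hs] using hν.trans (measure_mono (Set.singleton_subset_iff.2 ha))
      · simp [ha, hs]
    have : IsFiniteMeasure (p • Measure.dirac a) := Measure.smul_finite _ hp_top
    have hrest : (ν - p • Measure.dirac a) Set.univ = 1 - p := by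
      rw [Measure.sub_apply .univ hatom]; simp
    calc ∫⁻ x, f x ∂ν
        = ∫⁻ x, f x ∂(ν - p • Measure.dirac a) + p * f a := by
          conv_lhs => rw [← Measure.sub_add_cancel_of_le hatom]
          rw [lintegral_add_measure, lintegral_smul_measure, lintegral_dirac' a hf, smul_eq_mul]
      _ ≤ (1 - p) * (⨆ x, f x) + p * f a := by
          gcongr
          rw [← hrest, mul_comm, ← lintegral_const]
          exact lintegral_mono fun x => le_iSup f x
      _ = p * f a + (1 - p) * ⨆ x, f x := add_comm _ _
  · have : Nonempty α := ⟨a⟩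
    rw [ENNReal.mul_iSup, ENNReal.add_iSup]
    refine iSup_le fun x => ?_
    set ν := p • Measure.dirac a + (1 - p) • Measure.dirac x with hν
    refine le_iSup₂_of_le ν ⟨⟨?_⟩, ?_⟩ (le_of_eq ?_)
    · simp [hν, add_tsub_cancel_of_le hp]
    · simp [hν, Measure.dirac_apply_of_mem (Set.mem_singleton a)]
    · rw [hν, lintegral_add_measure, lintegral_smul_measure, lintegral_smul_measure,
        lintegral_dirac' a hf, lintegral_dirac' x hf, smul_eq_mul, smul_eq_mul]

end Contamination

section Risk

open Filter Topology

variable {E : Type*} [NormedAddCommGroup E] [InnerProductSpace ℝ E] [MeasurableSpace E]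

/-- The risk `E ‖m - η(m + Z)‖²`, for noise `Z ∼ μ`, of soft thresholding at level `r` as an
estimator of the fixed signal `m`. -/
def softRisk (μ : Measure E) (r : ℝ) (m : E) : ℝ≥0∞ :=
  ∫⁻ z, ENNReal.ofReal (‖m - softThreshold r (m + z)‖ ^ 2) ∂μ

/-- The probability measures on `E` with mass at least `1 - ε` at the origin. -/
def sparsePriors (E : Type*) [Zero E] [MeasurableSpace E] (ε : ℝ) : Set (Measure E) :=
  {ν | IsProbabilityMeasure ν ∧ ENNReal.ofReal (1 - ε) ≤ ν {0}}

/-- The minimax risk of soft thresholding over the `ε`-sparse priors on `E`, for noise of law `μ`,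
without the normalization by the dimension. -/
def minimaxSoftRisk (μ : Measure E) (ε : ℝ) : ℝ≥0∞ :=
  ⨅ (r : ℝ) (_ : 0 ≤ r), ⨆ ν ∈ sparsePriors E ε,
    ∫⁻ p, ENNReal.ofReal (‖p.1 - softThreshold r (p.1 + p.2)‖ ^ 2) ∂(ν.prod μ)

variable {μ : Measure E}

lemma integrable_norm_sq_add_const_sub_inner [IsFiniteMeasure μ] (hμ : MemLp id 2 μ) (s : ℝ)
    (c : E) : Integrable (fun z => ‖z‖ ^ 2 + s - 2 * inner ℝ c z) μ :=
  ((hμ.integrable_norm_pow two_ne_zero).add (integrable_const s)).sub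
    (((hμ.integrable one_le_two).const_inner c).const_mul 2)

lemma integral_norm_sq_add_const_sub_inner [CompleteSpace E] [IsProbabilityMeasure μ]
    (hμ : MemLp id 2 μ) (hμ₀ : ∫ z, z ∂μ = 0) (s : ℝ) (c : E) :
    ∫ z, (‖z‖ ^ 2 + s - 2 * inner ℝ c z) ∂μ = ∫ z, ‖z‖ ^ 2 ∂μ + s := by
  have hsq : Integrable (fun z : E => ‖z‖ ^ 2) μ := hμ.integrable_norm_pow two_ne_zero
  have hid : Integrable (fun z : E => z) μ := hμ.integrable one_le_two
  have hadd : Integrable (fun z : E => ‖z‖ ^ 2 + s) μ := hsq.add (integrable_const s)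
  rw [integral_sub hadd ((hid.const_inner c).const_mul 2), integral_add hsq (integrable_const s),
    integral_const_mul, integral_inner hid, hμ₀]
  simp

lemma softRisk_zero [IsFiniteMeasure μ] (hμ : MemLp id 2 μ) {r : ℝ} (hr : 0 ≤ r) :
    softRisk μ r 0 = ENNReal.ofReal (excessMoment 2 r μ) := by
  rw [excessMoment, ofReal_integral_eq_lintegral_ofReal (memLp_excess hμ r).integrable_sq
    (Eventually.of_forall fun z => sq_nonneg _)]
  simp only [softRisk, zero_add, zero_sub, norm_neg, norm_softThreshold hr]

lemma softRisk_le [CompleteSpace E] [IsProbabilityMeasure μ] (hμ : MemLp id 2 μ)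
    (hμ₀ : ∫ z, z ∂μ = 0) {r : ℝ} (hr : 0 ≤ r) (m : E) :
    softRisk μ r m ≤ ENNReal.ofReal (∫ z, ‖z‖ ^ 2 ∂μ + r ^ 2) := by
  have hle := norm_sub_softThreshold_add_sq_le hr m
  rw [← integral_norm_sq_add_const_sub_inner hμ hμ₀ (r ^ 2) (ballRetraction r m),
    ofReal_integral_eq_lintegral_ofReal (integrable_norm_sq_add_const_sub_inner hμ _ _)
      (Eventually.of_forall fun z => (sq_nonneg _).trans (hle z))]
  exact lintegral_mono fun z => ENNReal.ofReal_le_ofReal (hle z)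

variable [BorelSpace E] [SecondCountableTopology E]

lemma measurable_ofReal_norm_sub_softThreshold_add_sq (r : ℝ) :
    Measurable fun p : E × E => ENNReal.ofReal (‖p.1 - softThreshold r (p.1 + p.2)‖ ^ 2) := by
  fun_prop

-- For a distant signal, soft thresholding acts as the translation by `-(r / ‖u‖) • u`, which adds
-- its squared length `r ^ 2` to the variance of the noise.
lemma tendsto_softRisk_smul_atTop [CompleteSpace E] [IsProbabilityMeasure μ] (hμ : MemLp id 2 μ)
    (hμ₀ : ∫ z, z ∂μ = 0) {r : ℝ} (hr : 0 ≤ r) {u : E} (hu : u ≠ 0) :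
    Tendsto (fun t : ℝ => softRisk μ r (t • u)) atTop
      (𝓝 (ENNReal.ofReal (∫ z, ‖z‖ ^ 2 ∂μ + r ^ 2))) := by
  set v := (r / ‖u‖) • u with hv
  have hnorm_v : ‖v‖ = r := by
    rw [hv, norm_smul, Real.norm_of_nonneg (by positivity),
      div_mul_cancel₀ r (norm_ne_zero_iff.2 hu)]
  have hsq (z : E) : ‖v - z‖ ^ 2 = ‖z‖ ^ 2 + r ^ 2 - 2 * inner ℝ v z := by
    rw [norm_sub_sq_real, hnorm_v]; ring
  have hlimit : ENNReal.ofReal (∫ z, ‖z‖ ^ 2 ∂μ + r ^ 2) =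
      ∫⁻ z, ENNReal.ofReal (‖v - z‖ ^ 2) ∂μ := by
    rw [← integral_norm_sq_add_const_sub_inner hμ hμ₀ (r ^ 2) v]
    simp only [← hsq]
    refine ofReal_integral_eq_lintegral_ofReal ?_ (Eventually.of_forall fun z => sq_nonneg _)
    simpa only [hsq] using integrable_norm_sq_add_const_sub_inner hμ (r ^ 2) v
  have hbound (m z : E) : ‖m - softThreshold r (m + z)‖ ≤ r + ‖z‖ := by
    rw [sub_softThreshold_add]
    refine (norm_sub_le _ _).trans (add_le_add_left ?_ _)
    exact (norm_ballRetraction hr _).trans_le (min_le_right _ _)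
  have hfinite : ∫⁻ z, ENNReal.ofReal ((r + ‖z‖) ^ 2) ∂μ ≠ ∞ :=
    (((memLp_const r).add hμ.norm).integrable_sq).lintegral_lt_top.ne
  rw [hlimit]
  refine tendsto_lintegral_filter_of_dominated_convergence _
    (Eventually.of_forall fun t => by fun_prop)
    (Eventually.of_forall fun t => Eventually.of_forall fun z => ?_) hfinite
    (Eventually.of_forall fun z => ?_)
  · exact ENNReal.ofReal_le_ofReal (pow_le_pow_left₀ (norm_nonneg _) (hbound _ z) 2)
  · simp only [sub_softThreshold_add]
    exact ENNReal.tendsto_ofReal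
      (((tendsto_ballRetraction_smul_add_atTop r hu z).sub_const z).norm.pow 2)

lemma iSup_softRisk [CompleteSpace E] [Nontrivial E] [IsProbabilityMeasure μ] (hμ : MemLp id 2 μ)
    (hμ₀ : ∫ z, z ∂μ = 0) {r : ℝ} (hr : 0 ≤ r) :
    ⨆ m, softRisk μ r m = ENNReal.ofReal (∫ z, ‖z‖ ^ 2 ∂μ + r ^ 2) := by
  obtain ⟨u, hu⟩ := exists_ne (0 : E)
  exact le_antisymm (iSup_le (softRisk_le hμ hμ₀ hr))
    (le_of_tendsto' (tendsto_softRisk_smul_atTop hμ hμ₀ hr hu) fun t => le_iSup _ (t • u))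

lemma iSup_sparsePriors_softThreshold [CompleteSpace E] [Nontrivial E] [IsProbabilityMeasure μ]
    (hμ : MemLp id 2 μ) (hμ₀ : ∫ z, z ∂μ = 0) {r ε : ℝ} (hr : 0 ≤ r) (hε₀ : 0 ≤ ε) (hε₁ : ε ≤ 1) :
    ⨆ ν ∈ sparsePriors E ε,
        ∫⁻ p, ENNReal.ofReal (‖p.1 - softThreshold r (p.1 + p.2)‖ ^ 2) ∂(ν.prod μ) =
      ENNReal.ofReal ((1 - ε) * excessMoment 2 r μ + ε * (∫ z, ‖z‖ ^ 2 ∂μ + r ^ 2)) := by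
  have hmeas := measurable_ofReal_norm_sub_softThreshold_add_sq (E := E) r
  have hε : 0 ≤ 1 - ε := sub_nonneg.2 hε₁
  have hmoment : 0 ≤ excessMoment 2 r μ := integral_nonneg fun z => sq_nonneg _
  have hsq : 0 ≤ ∫ z, ‖z‖ ^ 2 ∂μ := integral_nonneg fun z => sq_nonneg _
  have hcompl : 1 - ENNReal.ofReal (1 - ε) = ENNReal.ofReal ε := by
    rw [← ENNReal.ofReal_one, ← ENNReal.ofReal_sub _ hε, sub_sub_self]
  calc ⨆ ν ∈ sparsePriors E ε,
        ∫⁻ p, ENNReal.ofReal (‖p.1 - softThreshold r (p.1 + p.2)‖ ^ 2) ∂(ν.prod μ)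
      = ⨆ ν ∈ sparsePriors E ε, ∫⁻ m, softRisk μ r m ∂ν :=
        iSup_congr fun ν => iSup_congr fun _ => lintegral_prod _ hmeas.aemeasurable
    _ = ENNReal.ofReal (1 - ε) * softRisk μ r 0 + ENNReal.ofReal ε * ⨆ m, softRisk μ r m := by
        rw [← hcompl]
        exact iSup_lintegral_of_le_measure_singleton (ENNReal.ofReal_le_one.2 (by linarith)) 0
          hmeas.lintegral_prod_right'
    _ = _ := by
        rw [softRisk_zero hμ hr, iSup_softRisk hμ hμ₀ hr, ← ENNReal.ofReal_mul hε,
          ← ENNReal.ofReal_mul hε₀, ← ENNReal.ofReal_add (mul_nonneg hε hmoment)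
            (mul_nonneg hε₀ (add_nonneg hsq (sq_nonneg r)))]

-- `hτε` is the vanishing at `τ` of the derivative in `r` of the worst-case risk, a convex function.
lemma minimaxSoftRisk_eq_of_stationary [CompleteSpace E] [Nontrivial E] [IsProbabilityMeasure μ]
    (hμ : MemLp id 2 μ) (hμ₀ : ∫ z, z ∂μ = 0) {τ ε : ℝ} (hτ : 0 ≤ τ) (hε₀ : 0 ≤ ε) (hε₁ : ε ≤ 1)
    (hτε : (1 - ε) * excessMoment 1 τ μ = ε * τ) :
    minimaxSoftRisk μ ε =
      ENNReal.ofReal ((1 - ε) * excessMoment 2 τ μ + ε * (∫ z, ‖z‖ ^ 2 ∂μ + τ ^ 2)) := by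
  rw [minimaxSoftRisk]
  apply le_antisymm
  · exact (iInf₂_le τ hτ).trans_eq (iSup_sparsePriors_softThreshold hμ hμ₀ hτ hε₀ hε₁)
  · refine le_iInf₂ fun r hr => ?_
    rw [iSup_sparsePriors_softThreshold hμ hμ₀ hr hε₀ hε₁]
    apply ENNReal.ofReal_le_ofReal
    have htangent : (1 - ε) * (excessMoment 2 τ μ - 2 * (r - τ) * excessMoment 1 τ μ) ≤
        (1 - ε) * excessMoment 2 r μ :=
      mul_le_mul_of_nonneg_left (excessMoment_two_tangent_le hμ τ r) (sub_nonneg.2 hε₁)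
    linear_combination htangent + 2 * (r - τ) * hτε + ε * sq_nonneg (r - τ)

theorem blockSoft_minimax_formula_general [CompleteSpace E] [IsProbabilityMeasure μ]
    (hμ : MemLp id 2 μ) (hμ₀ : ∫ z, z ∂μ = 0) {τ : ℝ} (hτ : 0 ≤ τ) (h₁ : 0 < excessMoment 1 τ μ) :
    minimaxSoftRisk μ (1 / (1 + τ / excessMoment 1 τ μ)) =
      ENNReal.ofReal
        ((∫ z, ‖z‖ ^ 2 ∂μ + τ ^ 2 + τ * excessMoment 2 τ μ / excessMoment 1 τ μ) /
          (1 + τ / excessMoment 1 τ μ)) := by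
  have := nontrivial_of_excessMoment_pos one_ne_zero hτ h₁
  have hh : 0 ≤ τ / excessMoment 1 τ μ := by positivity
  rw [minimaxSoftRisk_eq_of_stationary hμ hμ₀ hτ (by positivity)
    (div_le_one_of_le₀ (by linarith) (by positivity)) (by field_simp; ring)]
  congr 1
  field_simp
  ring

end Risk

section StdGaussian

variable {E : Type*} [NormedAddCommGroup E] [InnerProductSpace ℝ E] [FiniteDimensional ℝ E]
  [MeasurableSpace E] [BorelSpace E]

instance isOpenPosMeasure_stdGaussian : (ProbabilityTheory.stdGaussian E).IsOpenPosMeasure := by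
  have : (gaussianReal 0 1).IsOpenPosMeasure :=
    (gaussianReal_absolutelyContinuous' 0 one_ne_zero).isOpenPosMeasure
  refine Continuous.isOpenPosMeasure_map (by fun_prop) fun x => ?_
  exact ⟨_, (stdOrthonormalBasis ℝ E).sum_repr x⟩

lemma integral_norm_sq_stdGaussian :
    ∫ x, ‖x‖ ^ 2 ∂ProbabilityTheory.stdGaussian E = Module.finrank ℝ E := by
  let b := stdOrthonormalBasis ℝ E
  have hcoord (i) : ∫ x, inner ℝ (b i) x ^ 2 ∂ProbabilityTheory.stdGaussian E = 1 := by
    have hvar := variance_dual_stdGaussian (innerSL ℝ (b i))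
    rw [variance_of_integral_eq_zero (by fun_prop) (integral_strongDual_stdGaussian _)] at hvar
    simpa using hvar
  have hint (i) : Integrable (fun x => inner ℝ (b i) x ^ 2) (ProbabilityTheory.stdGaussian E) :=
    (IsGaussian.memLp_two_id.const_inner (b i)).integrable_sq
  simp only [← b.sum_sq_inner_right]
  rw [integral_finsetSum _ fun i _ => hint i]
  simp [hcoord]

end StdGaussian

section Coordinates

open WithLp

variable {B : ℕ}

lemma sqrt_sum_sq_eq_norm_toLp (y : Fin B → ℝ) : √(∑ i, y i ^ 2) = ‖toLp 2 y‖ := by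
  simp [EuclideanSpace.norm_eq]

lemma sum_sub_blockSoft_sq (r : ℝ) (m y : Fin B → ℝ) :
    ∑ i, (m i - blockSoft B r y i) ^ 2 = ‖toLp 2 m - softThreshold r (toLp 2 y)‖ ^ 2 := by
  simp [EuclideanSpace.real_norm_sq_eq, blockSoft, softThreshold, sqrt_sum_sq_eq_norm_toLp]

lemma map_toLp_stdGaussian :
    (stdGaussian B).map (MeasurableEquiv.toLp 2 (Fin B → ℝ)) =
      ProbabilityTheory.stdGaussian (EuclideanSpace ℝ (Fin B)) :=
  map_pi_eq_stdGaussian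

lemma map_toLp_mem_sparsePriors_iff {ε : ℝ} {ν : Measure (Fin B → ℝ)} :
    ν.map (MeasurableEquiv.toLp 2 (Fin B → ℝ)) ∈ sparsePriors (EuclideanSpace ℝ (Fin B)) ε ↔
      ν ∈ sparseClass B ε := by
  have hzero : MeasurableEquiv.toLp 2 (Fin B → ℝ) ⁻¹' {0} = {0} := by
    ext y; simp
  rw [sparsePriors, sparseClass, Set.mem_ofPred_eq, Set.mem_ofPred_eq, MeasurableEquiv.map_apply,
    hzero, Measure.isProbabilityMeasure_map_iff (MeasurableEquiv.measurable _).aemeasurable]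

lemma lintegral_blockSoft_prod_stdGaussian (r : ℝ) (ν : Measure (Fin B → ℝ)) [SFinite ν] :
    ∫⁻ p, ENNReal.ofReal (∑ i, (p.1 i - blockSoft B r (p.1 + p.2) i) ^ 2)
        ∂(ν.prod (stdGaussian B)) =
      ∫⁻ p, ENNReal.ofReal (‖p.1 - softThreshold r (p.1 + p.2)‖ ^ 2)
        ∂((ν.map (MeasurableEquiv.toLp 2 (Fin B → ℝ))).prod
          (ProbabilityTheory.stdGaussian (EuclideanSpace ℝ (Fin B)))) := by
  have : SFinite (stdGaussian B) := by unfold _root_.stdGaussian; infer_instance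
  let e := MeasurableEquiv.toLp 2 (Fin B → ℝ)
  have hmap : Measure.map (Prod.map e e) (ν.prod (stdGaussian B)) =
      Measure.map (e.prodCongr e) (ν.prod (stdGaussian B)) := rfl
  rw [← map_toLp_stdGaussian, Measure.map_prod_map _ _ e.measurable e.measurable, hmap,
    lintegral_map_equiv]
  simp only [sum_sub_blockSoft_sq]
  rfl

lemma MBlockSoft_eq_inv_mul_minimaxSoftRisk (B : ℕ) (ε : ℝ) :
    MBlockSoft B ε =
      (B : ℝ≥0∞)⁻¹ *
        minimaxSoftRisk (ProbabilityTheory.stdGaussian (EuclideanSpace ℝ (Fin B))) ε := by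
  let e := MeasurableEquiv.toLp 2 (Fin B → ℝ)
  have hsurj : Function.Surjective fun ν : Measure (Fin B → ℝ) => ν.map e :=
    fun ν => ⟨ν.map e.symm, e.map_map_symm⟩
  rw [MBlockSoft, minimaxSoftRisk]
  congr 1
  refine iInf_congr fun r => iInf_congr fun _ => hsurj.iSup_congr _ fun ν => ?_
  refine iSup_congr_Prop map_toLp_mem_sparsePriors_iff fun hν => ?_
  have : IsProbabilityMeasure ν := hν.1
  exact (lintegral_blockSoft_prod_stdGaussian r ν).symm

lemma ite_sq_le_eq_max_pow {k : ℕ} (hk : k ≠ 0) {a r : ℝ} (ha : 0 ≤ a) (hr : 0 ≤ r) :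
    (if r ^ 2 ≤ a ^ 2 then (a - r) ^ k else 0) = max (a - r) 0 ^ k := by
  simp only [pow_le_pow_iff_left₀ hr ha two_ne_zero]
  split_ifs with h
  · rw [max_eq_left (sub_nonneg.2 h)]
  · rw [max_eq_right (by linarith), zero_pow hk]

lemma integral_ite_stdGaussian_eq_excessMoment {k : ℕ} (hk : k ≠ 0) {r : ℝ} (hr : 0 ≤ r) :
    ∫ z, (if r ^ 2 ≤ ∑ i, z i ^ 2 then (√(∑ i, z i ^ 2) - r) ^ k else 0) ∂(stdGaussian B) =
      excessMoment k r (ProbabilityTheory.stdGaussian (EuclideanSpace ℝ (Fin B))) := by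
  have hpointwise (z : Fin B → ℝ) :
      (if r ^ 2 ≤ ∑ i, z i ^ 2 then (√(∑ i, z i ^ 2) - r) ^ k else 0) =
        max (‖toLp 2 z‖ - r) 0 ^ k := by
    rw [← ite_sq_le_eq_max_pow hk (norm_nonneg (toLp 2 z)) hr, sqrt_sum_sq_eq_norm_toLp,
      EuclideanSpace.real_norm_sq_eq]
  simp only [hpointwise]
  rw [excessMoment, ← map_toLp_stdGaussian, integral_map_equiv]
  rfl

lemma Eind1_eq_excessMoment {r : ℝ} (hr : 0 ≤ r) :
    Eind1 B r =
      excessMoment 1 r (ProbabilityTheory.stdGaussian (EuclideanSpace ℝ (Fin B))) := by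
  simpa only [pow_one, Eind1] using integral_ite_stdGaussian_eq_excessMoment one_ne_zero hr

lemma Eind2_eq_excessMoment {r : ℝ} (hr : 0 ≤ r) :
    Eind2 B r =
      excessMoment 2 r (ProbabilityTheory.stdGaussian (EuclideanSpace ℝ (Fin B))) :=
  integral_ite_stdGaussian_eq_excessMoment two_ne_zero hr

end Coordinates

/-- **Minimax MSE of block soft thresholding (parametric formula).**
For every `τ ∈ [0,∞)`, setting `ε = 1/(1 + h(τ²))`, one has
`M_B(ε|BlockSoft) = (B + τ² + g(τ²)) / (B(1 + h(τ²)))`. -/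
theorem blockSoft_minimax_formula (B : ℕ) (hB : 1 ≤ B) (τ : ℝ) (hτ : 0 ≤ τ) :
    MBlockSoft B (1 / (1 + hfun B τ)) =
      ENNReal.ofReal ((B + τ ^ 2 + gfun B τ) / (B * (1 + hfun B τ))) := by
  have : Nonempty (Fin B) := ⟨0, hB⟩
  have hB₀ : (0 : ℝ) < B := by exact_mod_cast hB
  have hE₁ := excessMoment_one_pos (μ := ProbabilityTheory.stdGaussian (EuclideanSpace ℝ (Fin B)))
    IsGaussian.integrable_id τ
  rw [MBlockSoft_eq_inv_mul_minimaxSoftRisk, hfun, gfun, Eind1_eq_excessMoment hτ,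
    Eind2_eq_excessMoment hτ, blockSoft_minimax_formula_general IsGaussian.memLp_two_id
      integral_id_stdGaussian hτ hE₁, integral_norm_sq_stdGaussian, finrank_euclideanSpace_fin,
    ← ENNReal.ofReal_natCast, ← ENNReal.ofReal_inv_of_pos hB₀,
    ← ENNReal.ofReal_mul (inv_nonneg.2 hB₀.le), mul_comm (B : ℝ), ← div_div, inv_mul_eq_div]
end
end

section
/- Let B > 2 and let η^JS: ℝ^B → ℝ^B be the positive-part James–Stein estimator η^JS(y) = (1 − (B−2)/‖y‖₂²)₊ · y. Then the minimax MSE of James–Stein shrinkage over the class of ε-block-sparse distributions satisfies M_B(ε|JamesStein) = (1/B) sup_{ν∈F_{ε,B}} E ‖X − η^JS(X+Z)‖₂² ≤ ε + 2/B. -/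
open MeasureTheory ProbabilityTheory ENNReal

noncomputable section

/-- The positive-part James–Stein estimator
`η^JS(y) = (1 − (B−2)/‖y‖₂²)₊ · y` on `ℝ^B`. -/
def jamesStein (B : ℕ) (y : Fin B → ℝ) : Fin B → ℝ :=
  (max (1 - ((B : ℝ) - 2) / (∑ i, (y i) ^ 2)) 0) • y

/-!
Put `c = B - 2` and write `η(y) = y - g(y)` with `g(y) = c y / max(c, ‖y‖²)`, which is continuous
and piecewise smooth. For `Y ∼ N(θ, I)`, Stein's identity `E⟨Y - θ, g(Y)⟩ = E div g(Y)` gives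
`E‖θ - η(Y)‖² = B + E(‖g‖² - 2 div g)(Y)`. Pointwise `‖g‖² ≤ 2 div g`, so the risk is at most `B`
for every `θ`. At `θ = 0`, the pointwise bound `‖g‖² + c ≤ div g + ⟨y, g⟩` and Stein's identity
`E⟨Y, g⟩ = E div g` improve this to `B - c = 2`. Averaging over `X ∼ ν`, the risk is at most
`2 ν({0}) + B ν({0}ᶜ) ≤ 2 + B ε`.
-/

open Filter Set Function
open scoped Topology NNReal

section Analysis

variable {E : Type*} [NormedAddCommGroup E] [NormedSpace ℝ E] [CompleteSpace E]

theorem integral_eq_zero_of_hasDerivAt_off_countable_of_integrable {f f' : ℝ → E}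
    (hf : Continuous f) (hd : {x | ¬ HasDerivAt f (f' x) x}.Countable)
    (hf' : Integrable f') (hfi : Integrable f) : ∫ x, f' x = 0 := by
  have hftc (R : ℝ) : ∫ x in (-R)..R, f' x = f R - f (-R) :=
    integral_eq_of_hasDerivAt_off_countable f f' hd hf.continuousOn
      (fun x hx => not_not.1 hx.2) hf'.intervalIntegrable
  have hlim : Tendsto (fun R => f R - f (-R)) atTop (𝓝 (∫ x, f' x)) := by
    simpa only [hftc, id] using
      intervalIntegral_tendsto_integral hf' tendsto_neg_atTop_atBot tendsto_id
  -- An integrable function on a half-line can only converge to zero.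
  have hint : IntegrableAtFilter (fun R => f R - f (-R)) atTop :=
    ⟨univ, univ_mem, (hfi.sub hfi.comp_neg).integrableOn⟩
  refine hint.eq_zero_of_tendsto (fun s hs => ?_) hlim
  obtain ⟨b, hb⟩ := mem_atTop_sets.1 hs
  exact top_le_iff.1 (Real.volume_Ici (a := b) ▸ measure_mono hb)

end Analysis

section Gaussian

variable {m : ℝ} {v : ℝ≥0}

lemma hasDerivAt_gaussianPDFReal (m : ℝ) (v : ℝ≥0) (x : ℝ) :
    HasDerivAt (gaussianPDFReal m v) (-((x - m) / v) * gaussianPDFReal m v x) x := by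
  have hexponent : HasDerivAt (fun x => -(x - m) ^ 2 / (2 * v)) (-((x - m) / v)) x := by
    refine ((((hasDerivAt_id x).sub_const m).pow 2).neg.div_const (2 * (v : ℝ))).congr_deriv ?_
    simp only [id, pow_one, Nat.cast_ofNat, Nat.add_one_sub_one, mul_one]
    rw [neg_div, mul_div_mul_left _ _ two_ne_zero]
  refine (hexponent.exp.const_mul (√(2 * Real.pi * v))⁻¹).congr_deriv ?_
  rw [gaussianPDFReal]
  ring

lemma integrable_gaussianReal_iff (hv : v ≠ 0) {f : ℝ → ℝ} :
    Integrable f (gaussianReal m v) ↔ Integrable fun x => gaussianPDFReal m v x * f x := by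
  rw [gaussianReal_of_var_ne_zero m hv,
    integrable_withDensity_iff_integrable_smul' (measurable_gaussianPDF m v)
      (ae_of_all _ fun _ => gaussianPDF_lt_top)]
  simp only [toReal_gaussianPDF, smul_eq_mul]

theorem integral_sub_mean_mul_gaussianReal {f f' : ℝ → ℝ} (hf : Continuous f)
    (hd : {x | ¬ HasDerivAt f (f' x) x}.Countable) (hfi : Integrable f (gaussianReal m v))
    (hxf : Integrable (fun x => (x - m) * f x) (gaussianReal m v))
    (hf' : Integrable f' (gaussianReal m v)) :
    ∫ x, (x - m) * f x ∂gaussianReal m v = v * ∫ x, f' x ∂gaussianReal m v := by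
  rcases eq_or_ne v 0 with rfl | hv
  · simp
  set q := gaussianPDFReal m v
  rw [integrable_gaussianReal_iff hv] at hfi hxf hf'
  have hv' : (v : ℝ) ≠ 0 := NNReal.coe_ne_zero.2 hv
  have hderiv {x : ℝ} (hx : HasDerivAt f (f' x) x) : HasDerivAt (fun x => q x * f x)
      (q x * f' x - (v : ℝ)⁻¹ * (q x * ((x - m) * f x))) x := by
    refine ((hasDerivAt_gaussianPDFReal m v x).mul hx).congr_deriv ?_
    ring
  have hcont : Continuous fun x => q x * f x := by
    refine Continuous.mul (continuous_iff_continuousAt.2 fun x => ?_) hf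
    exact (hasDerivAt_gaussianPDFReal m v x).continuousAt
  have hzero : ∫ x, (q x * f' x - (v : ℝ)⁻¹ * (q x * ((x - m) * f x))) = 0 :=
    integral_eq_zero_of_hasDerivAt_off_countable_of_integrable hcont
      (hd.mono <| Set.ofPred_subset_ofPred_of_imp fun _ => mt hderiv)
      (hf'.sub (hxf.const_mul _)) hfi
  rw [integral_sub hf' (hxf.const_mul _), integral_const_mul, sub_eq_zero] at hzero
  simp only [integral_gaussianReal_eq_integral_smul hv, smul_eq_mul]
  rw [hzero, mul_inv_cancel_left₀ hv']

end Gaussian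

section Product

variable {ι : Type*} [Fintype ι] [DecidableEq ι]

lemma measurePreserving_update {X : ι → Type*} [∀ j, MeasurableSpace (X j)]
    (μ : ∀ j, Measure (X j)) [∀ j, SigmaFinite (μ j)] (i : ι) [IsProbabilityMeasure (μ i)] :
    MeasurePreserving (fun p : (∀ j, X j) × X i => update p.1 i p.2)
      ((Measure.pi μ).prod (μ i)) (Measure.pi μ) := by
  refine ⟨measurable_update', (Measure.pi_eq fun s hs => ?_).symm⟩
  have hpreimage : (fun p : (∀ j, X j) × X i => update p.1 i p.2) ⁻¹' univ.pi s =
      univ.pi (update s i univ) ×ˢ s i := by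
    ext p
    simp only [mem_preimage, mem_prod, mem_univ_pi]
    constructor
    · refine fun h => ⟨fun j => ?_, by simpa using h i⟩
      rcases eq_or_ne j i with rfl | hj
      · simp
      · simpa [hj] using h j
    · rintro ⟨h, hi⟩ j
      rcases eq_or_ne j i with rfl | hj
      · simpa using hi
      · simpa [hj] using h j
  rw [Measure.map_apply measurable_update' (MeasurableSet.univ_pi hs), hpreimage,
    Measure.prod_prod, Measure.pi_pi, ← Finset.prod_erase_mul _ _ (Finset.mem_univ i),
    ← Finset.prod_erase_mul _ (fun j => μ j (s j)) (Finset.mem_univ i), update_self,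
    measure_univ, mul_one]
  congr 1
  refine Finset.prod_congr rfl fun j hj => ?_
  rw [update_of_ne (Finset.ne_of_mem_erase hj)]

lemma integral_pi_eq_integral_update {X : ι → Type*} [∀ j, MeasurableSpace (X j)]
    {μ : ∀ j, Measure (X j)} [∀ j, SigmaFinite (μ j)] {i : ι} [IsProbabilityMeasure (μ i)]
    {E : Type*} [NormedAddCommGroup E] [NormedSpace ℝ E] {f : (∀ j, X j) → E}
    (hf : Integrable f (Measure.pi μ)) :
    ∫ x, f x ∂Measure.pi μ = ∫ x, ∫ t, f (update x i t) ∂μ i ∂Measure.pi μ := by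
  have hmp := measurePreserving_update μ i
  calc ∫ x, f x ∂Measure.pi μ
      = ∫ p, f (update p.1 i p.2) ∂(Measure.pi μ).prod (μ i) := by
        conv_lhs => rw [← hmp.map_eq]
        exact integral_map hmp.aemeasurable (hmp.map_eq.symm ▸ hf.aestronglyMeasurable)
    _ = ∫ x, ∫ t, f (update x i t) ∂μ i ∂Measure.pi μ :=
        integral_prod _ (hmp.integrable_comp_of_integrable hf)

lemma ae_integrable_update {X : ι → Type*} [∀ j, MeasurableSpace (X j)]
    {μ : ∀ j, Measure (X j)} [∀ j, SigmaFinite (μ j)] {i : ι} [IsProbabilityMeasure (μ i)]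
    {E : Type*} [NormedAddCommGroup E] {f : (∀ j, X j) → E}
    (hf : Integrable f (Measure.pi μ)) :
    ∀ᵐ x ∂Measure.pi μ, Integrable (fun t => f (update x i t)) (μ i) :=
  ((measurePreserving_update μ i).integrable_comp_of_integrable hf).prod_right_ae

/-- `f'` is the partial derivative of `f` in the `i`-th coordinate, in the weak sense that suffices
for integration by parts: along every line parallel to the `i`-th axis, `f` is continuous and has
derivative `f'` at all but countably many points. -/
structure HasPartialDerivOffCountable (i : ι) (f f' : (ι → ℝ) → ℝ) : Prop where
  continuous_update (y : ι → ℝ) : Continuous fun t => f (update y i t)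
  countable (y : ι → ℝ) :
    {t | ¬ HasDerivAt (fun s => f (update y i s)) (f' (update y i t)) t}.Countable

variable {μ : ι → Measure ℝ} [∀ j, SigmaFinite (μ j)] {i : ι} {m : ℝ} {v : ℝ≥0}
  {f f' : (ι → ℝ) → ℝ}

theorem HasPartialDerivOffCountable.integral_sub_mean_mul (h : HasPartialDerivOffCountable i f f')
    (hi : μ i = gaussianReal m v) (hf : Integrable f (Measure.pi μ))
    (hxf : Integrable (fun y => (y i - m) * f y) (Measure.pi μ))
    (hf' : Integrable f' (Measure.pi μ)) :
    ∫ y, (y i - m) * f y ∂Measure.pi μ = v * ∫ y, f' y ∂Measure.pi μ := by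
  have : IsProbabilityMeasure (μ i) := hi ▸ inferInstance
  rw [integral_pi_eq_integral_update (i := i) hxf, integral_pi_eq_integral_update (i := i) hf',
    ← integral_const_mul]
  refine integral_congr_ae ?_
  filter_upwards [ae_integrable_update (i := i) hf, ae_integrable_update (i := i) hxf,
    ae_integrable_update (i := i) hf'] with y hfy hxfy hfy'
  simp only [update_self, hi] at hfy hxfy hfy' ⊢
  exact integral_sub_mean_mul_gaussianReal (h.continuous_update y) (h.countable y) hfy hxfy hfy'

end Product

section UnbiasedRisk

variable {ι : Type*} [Fintype ι]

/-- The Gaussian location model `N(θ, I)` on `ℝ^ι`; `isoGaussian 0` is the standard Gaussian. -/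
abbrev isoGaussian (θ : ι → ℝ) : Measure (ι → ℝ) :=
  Measure.pi fun i => gaussianReal (θ i) 1

lemma measurePreserving_add_stdGaussian {B : ℕ} (θ : Fin B → ℝ) :
    MeasurePreserving (fun z => θ + z) (_root_.stdGaussian B) (isoGaussian θ) :=
  measurePreserving_pi (fun _ => gaussianReal 0 1) (fun i => gaussianReal (θ i) 1)
    (f := fun i x => θ i + x) fun i =>
      ⟨measurable_const_add (θ i), by rw [gaussianReal_map_const_add, zero_add]⟩

lemma memLp_eval_isoGaussian (θ : ι → ℝ) (i : ι) :
    MemLp (fun y => y i) 2 (isoGaussian θ) :=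
  (memLp_id_gaussianReal 2).comp_measurePreserving (measurePreserving_eval _ i)

lemma memLp_eval_sub_isoGaussian (θ : ι → ℝ) (i : ι) :
    MemLp (fun y => y i - θ i) 2 (isoGaussian θ) :=
  (memLp_eval_isoGaussian θ i).sub (memLp_const _)

lemma integral_sq_eval_sub_isoGaussian (θ : ι → ℝ) (i : ι) :
    ∫ y, (y i - θ i) ^ 2 ∂isoGaussian θ = 1 := by
  have hvar := variance_id_gaussianReal (μ := θ i) (v := 1)
  rw [variance_eq_integral aemeasurable_id] at hvar
  rw [integral_comp_eval (μ := fun j => gaussianReal (θ j) 1) (i := i)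
    (f := fun x => (x - θ i) ^ 2) (by fun_prop)]
  simpa using hvar

variable [DecidableEq ι] {θ : ι → ℝ} {i : ι} {f f' : (ι → ℝ) → ℝ}

theorem HasPartialDerivOffCountable.integral_mul_isoGaussian
    (h : HasPartialDerivOffCountable i f f') (hf : MemLp f 2 (isoGaussian θ))
    (hf' : Integrable f' (isoGaussian θ)) :
    ∫ y, (y i - θ i) * f y ∂isoGaussian θ = ∫ y, f' y ∂isoGaussian θ := by
  simpa using h.integral_sub_mean_mul rfl (hf.integrable one_le_two)
    ((memLp_eval_sub_isoGaussian θ i).integrable_mul hf) hf'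

theorem HasPartialDerivOffCountable.integral_sq_sub_isoGaussian
    (h : HasPartialDerivOffCountable i f f') (hf : MemLp f 2 (isoGaussian θ))
    (hf' : Integrable f' (isoGaussian θ)) :
    ∫ y, (θ i - (y i - f y)) ^ 2 ∂isoGaussian θ =
      1 + ∫ y, (f y ^ 2 - 2 * f' y) ∂isoGaussian θ := by
  have hcross : Integrable (fun y => (y i - θ i) * f y) (isoGaussian θ) :=
    (memLp_eval_sub_isoGaussian θ i).integrable_mul hf
  have hresidual : Integrable (fun y => f y ^ 2 - 2 * ((y i - θ i) * f y)) (isoGaussian θ) :=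
    hf.integrable_sq.sub (hcross.const_mul 2)
  calc ∫ y, (θ i - (y i - f y)) ^ 2 ∂isoGaussian θ
      = ∫ y, ((y i - θ i) ^ 2 + (f y ^ 2 - 2 * ((y i - θ i) * f y))) ∂isoGaussian θ := by
        congr with y
        ring
    _ = 1 + (∫ y, f y ^ 2 ∂isoGaussian θ - 2 * ∫ y, f' y ∂isoGaussian θ) := by
        rw [integral_add (memLp_eval_sub_isoGaussian θ i).integrable_sq hresidual,
          integral_sub hf.integrable_sq (hcross.const_mul 2), integral_const_mul,
          integral_sq_eval_sub_isoGaussian, h.integral_mul_isoGaussian hf hf']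
    _ = 1 + ∫ y, (f y ^ 2 - 2 * f' y) ∂isoGaussian θ := by
        rw [integral_sub hf.integrable_sq (hf'.const_mul 2), integral_const_mul]

end UnbiasedRisk

section Shrinkage

variable {ι : Type*} [Fintype ι] {c : ℝ} {y : ι → ℝ}

/-- The amount by which positive-part shrinkage with constant `c` moves the observation `y`: for
`c > 0`, `y - shrinkage c y = (1 - c / ‖y‖²)₊ y`. The maximum in the denominator makes this
continuous at the origin, too. -/
def shrinkage (c : ℝ) (y : ι → ℝ) : ι → ℝ :=
  (c / max c (∑ j, y j ^ 2)) • y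

/-- The partial derivative of `shrinkage c · i` in the `i`-th coordinate, with the value from inside
the ball on the sphere `‖y‖² = c`. -/
def shrinkageDeriv (c : ℝ) (y : ι → ℝ) (i : ι) : ℝ :=
  if ∑ j, y j ^ 2 ≤ c then 1
  else c / (∑ j, y j ^ 2) - 2 * c * y i ^ 2 / (∑ j, y j ^ 2) ^ 2

lemma shrinkage_of_le (hc : c ≠ 0) (hy : ∑ j, y j ^ 2 ≤ c) : shrinkage c y = y := by
  rw [shrinkage, max_eq_left hy, div_self hc, one_smul]

lemma shrinkage_of_ge (hy : c ≤ ∑ j, y j ^ 2) :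
    shrinkage c y = (c / ∑ j, y j ^ 2) • y := by
  rw [shrinkage, max_eq_right hy]

lemma abs_shrinkage_le (hc : 0 ≤ c) (y : ι → ℝ) (i : ι) : |shrinkage c y i| ≤ |y i| := by
  have hmax : c ≤ max c (∑ j, y j ^ 2) := le_max_left _ _
  rw [shrinkage, Pi.smul_apply, smul_eq_mul, abs_mul,
    abs_of_nonneg (div_nonneg hc (hc.trans hmax))]
  exact mul_le_of_le_one_left (abs_nonneg _) (div_le_one_of_le₀ hmax (hc.trans hmax))

lemma abs_shrinkageDeriv_le (hc : 0 ≤ c) (y : ι → ℝ) (i : ι) : |shrinkageDeriv c y i| ≤ 2 := by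
  rw [shrinkageDeriv]
  split_ifs with h
  · norm_num
  have hcS : c < ∑ j, y j ^ 2 := not_le.1 h
  have hyi : y i ^ 2 ≤ ∑ j, y j ^ 2 :=
    Finset.single_le_sum (f := fun j => y j ^ 2) (fun _ _ => sq_nonneg _) (Finset.mem_univ i)
  set S := ∑ j, y j ^ 2
  have hS : 0 < S := hc.trans_lt hcS
  have hfirst : c / S ≤ 1 := (div_le_one hS).2 hcS.le
  have hsecond : 2 * c * y i ^ 2 / S ^ 2 ≤ 2 := by
    rw [div_le_iff₀ (by positivity)]
    nlinarith [mul_le_mul hcS.le hyi (sq_nonneg _) hS.le]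
  have hfirst_nonneg : 0 ≤ c / S := by positivity
  have hsecond_nonneg : 0 ≤ 2 * c * y i ^ 2 / S ^ 2 := by positivity
  exact abs_le.2 ⟨by linarith, by linarith⟩

lemma measurable_shrinkage (c : ℝ) (i : ι) : Measurable fun y : ι → ℝ => shrinkage c y i := by
  simp only [shrinkage, Pi.smul_apply, smul_eq_mul]
  fun_prop

lemma measurable_shrinkageDeriv (c : ℝ) (i : ι) :
    Measurable fun y : ι → ℝ => shrinkageDeriv c y i :=
  Measurable.ite (measurableSet_le (by fun_prop) (by fun_prop)) (by fun_prop) (by fun_prop)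

lemma memLp_shrinkage (hc : 0 ≤ c) (θ : ι → ℝ) (i : ι) :
    MemLp (fun y => shrinkage c y i) 2 (isoGaussian θ) :=
  (memLp_eval_isoGaussian θ i).mono (measurable_shrinkage c i).aestronglyMeasurable
    (ae_of_all _ fun y => abs_shrinkage_le hc y i)

lemma integrable_shrinkageDeriv (hc : 0 ≤ c) (θ : ι → ℝ) (i : ι) :
    Integrable (fun y => shrinkageDeriv c y i) (isoGaussian θ) :=
  Integrable.of_bound (measurable_shrinkageDeriv c i).aestronglyMeasurable 2
    (ae_of_all _ fun y => abs_shrinkageDeriv_le hc y i)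

lemma hasDerivAt_div_max_sq_add_mul (hc : 0 < c) {a t : ℝ} (ht : t ^ 2 + a ≠ c) :
    HasDerivAt (fun s => c / max c (s ^ 2 + a) * s)
      (if t ^ 2 + a ≤ c then 1 else c / (t ^ 2 + a) - 2 * c * t ^ 2 / (t ^ 2 + a) ^ 2) t := by
  have hcont : Continuous fun s : ℝ => s ^ 2 + a := by fun_prop
  rcases ht.lt_or_gt with hlt | hgt
  · rw [if_pos hlt.le]
    refine (hasDerivAt_id t).congr_of_eventuallyEq ?_
    filter_upwards [hcont.continuousAt.eventually_lt_const hlt] with s hs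
    rw [max_eq_left hs.le, div_self hc.ne', one_mul, id]
  · rw [if_neg hgt.not_ge]
    have hne : t ^ 2 + a ≠ 0 := (hc.trans hgt).ne'
    have hderiv : HasDerivAt (fun s => c * (s ^ 2 + a)⁻¹ * s)
        (c / (t ^ 2 + a) - 2 * c * t ^ 2 / (t ^ 2 + a) ^ 2) t := by
      refine ((((((hasDerivAt_pow 2 t).add_const a).inv hne).const_mul c).mul
        (hasDerivAt_id t))).congr_deriv ?_
      simp only [id, Pi.inv_apply, Nat.cast_ofNat, Nat.add_one_sub_one, pow_one]
      field_simp
      ring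
    refine hderiv.congr_of_eventuallyEq ?_
    filter_upwards [hcont.continuousAt.eventually_const_lt hgt] with s hs
    rw [max_eq_right hs.le, div_eq_mul_inv]

lemma sum_sq_update [DecidableEq ι] (y : ι → ℝ) (i : ι) (t : ℝ) :
    ∑ j, update y i t j ^ 2 = t ^ 2 + ∑ j ∈ Finset.univ.erase i, y j ^ 2 := by
  rw [← Finset.add_sum_erase _ _ (Finset.mem_univ i), update_self]
  congr 1
  refine Finset.sum_congr rfl fun j hj => ?_
  rw [update_of_ne (Finset.ne_of_mem_erase hj)]

lemma countable_setOf_sq_add_eq (a c : ℝ) : {t : ℝ | t ^ 2 + a = c}.Countable := by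
  refine (toFinite {√(c - a), -√(c - a)}).countable.mono fun t ht => ?_
  have hsq : t ^ 2 = c - a := eq_sub_of_add_eq ht
  exact sq_eq_sq_iff_eq_or_eq_neg.1 (hsq.trans (Real.sq_sqrt (hsq ▸ sq_nonneg t)).symm)

lemma hasPartialDerivOffCountable_shrinkage [DecidableEq ι] (hc : 0 < c) (i : ι) :
    HasPartialDerivOffCountable i (fun y => shrinkage c y i) (fun y => shrinkageDeriv c y i) := by
  constructor <;> intro y <;>
    simp only [shrinkage, shrinkageDeriv, Pi.smul_apply, smul_eq_mul, sum_sq_update, update_self]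
  · have hmax (t : ℝ) : max c (t ^ 2 + ∑ j ∈ Finset.univ.erase i, y j ^ 2) ≠ 0 :=
      (lt_max_of_lt_left hc).ne'
    fun_prop (disch := exact hmax _)
  · refine (countable_setOf_sq_add_eq (∑ j ∈ Finset.univ.erase i, y j ^ 2) c).mono fun t ht => ?_
    exact not_imp_comm.1 (hasDerivAt_div_max_sq_add_mul hc) ht

lemma sum_shrinkageDeriv_of_le (hy : ∑ j, y j ^ 2 ≤ c) :
    ∑ i, shrinkageDeriv c y i = Fintype.card ι := by
  simp [shrinkageDeriv, hy]

lemma sum_shrinkageDeriv_of_lt (hc : 0 ≤ c) (hy : c < ∑ j, y j ^ 2) :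
    ∑ i, shrinkageDeriv c y i = (Fintype.card ι - 2) * c / ∑ j, y j ^ 2 := by
  have hS : ∑ j, y j ^ 2 ≠ 0 := (hc.trans_lt hy).ne'
  simp only [shrinkageDeriv, hy.not_ge, if_false, Finset.sum_sub_distrib, ← Finset.sum_div,
    ← Finset.mul_sum, Finset.sum_const, Finset.card_univ, nsmul_eq_mul]
  field_simp

lemma sum_shrinkage_sq_of_lt (hc : 0 ≤ c) (hy : c < ∑ j, y j ^ 2) :
    ∑ i, shrinkage c y i ^ 2 = c ^ 2 / ∑ j, y j ^ 2 := by
  have hS : ∑ j, y j ^ 2 ≠ 0 := (hc.trans_lt hy).ne'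
  simp only [shrinkage_of_ge hy.le, Pi.smul_apply, smul_eq_mul, mul_pow, ← Finset.mul_sum]
  field_simp

lemma sum_mul_shrinkage_of_lt (hc : 0 ≤ c) (hy : c < ∑ j, y j ^ 2) :
    ∑ i, y i * shrinkage c y i = c := by
  have hS : ∑ j, y j ^ 2 ≠ 0 := (hc.trans_lt hy).ne'
  simp only [shrinkage_of_ge hy.le, Pi.smul_apply, smul_eq_mul, mul_left_comm (y _), ← sq,
    ← Finset.mul_sum]
  field_simp

lemma sum_shrinkage_sq_le_two_mul_sum_shrinkageDeriv (hc : 0 < c)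
    (hcard : c ≤ 2 * (Fintype.card ι - 2)) (y : ι → ℝ) :
    ∑ i, shrinkage c y i ^ 2 ≤ 2 * ∑ i, shrinkageDeriv c y i := by
  rcases le_or_gt (∑ j, y j ^ 2) c with hy | hy
  · rw [shrinkage_of_le hc.ne' hy, sum_shrinkageDeriv_of_le hy]
    linarith
  · rw [sum_shrinkage_sq_of_lt hc.le hy, sum_shrinkageDeriv_of_lt hc.le hy, ← mul_div_assoc]
    refine div_le_div_of_nonneg_right ?_ (hc.trans hy).le
    nlinarith

lemma sum_shrinkage_sq_add_le (hc : 0 < c) (hcard : c ≤ Fintype.card ι - 2) (y : ι → ℝ) :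
    ∑ i, shrinkage c y i ^ 2 + c ≤ ∑ i, shrinkageDeriv c y i + ∑ i, y i * shrinkage c y i := by
  rcases le_or_gt (∑ j, y j ^ 2) c with hy | hy
  · rw [shrinkage_of_le hc.ne' hy, sum_shrinkageDeriv_of_le hy]
    simp only [← sq]
    linarith
  · rw [sum_shrinkage_sq_of_lt hc.le hy, sum_shrinkageDeriv_of_lt hc.le hy,
      sum_mul_shrinkage_of_lt hc.le hy, sq]
    gcongr

end Shrinkage

section Risk

variable {ι : Type*} [Fintype ι] {c : ℝ}

lemma integrable_sq_sub_shrinkage (hc : 0 ≤ c) (θ : ι → ℝ) (i : ι) :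
    Integrable (fun y => (θ i - (y i - shrinkage c y i)) ^ 2) (isoGaussian θ) :=
  ((memLp_const (θ i)).sub
    ((memLp_eval_isoGaussian θ i).sub (memLp_shrinkage hc θ i))).integrable_sq

lemma integrable_sub_mul_shrinkage (hc : 0 ≤ c) (θ : ι → ℝ) (i : ι) :
    Integrable (fun y => (y i - θ i) * shrinkage c y i) (isoGaussian θ) :=
  (memLp_eval_sub_isoGaussian θ i).integrable_mul (memLp_shrinkage hc θ i)

theorem integral_shrinkage_loss_eq (hc : 0 < c) (θ : ι → ℝ) :
    ∫ y, ∑ i, (θ i - (y i - shrinkage c y i)) ^ 2 ∂isoGaussian θ = Fintype.card ι +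
      ∫ y, (∑ i, shrinkage c y i ^ 2 - 2 * ∑ i, shrinkageDeriv c y i) ∂isoGaussian θ := by
  classical
  have hL2 := memLp_shrinkage hc.le θ
  have hderiv := integrable_shrinkageDeriv hc.le θ
  have hresidual (i : ι) :
      Integrable (fun y => shrinkage c y i ^ 2 - 2 * shrinkageDeriv c y i) (isoGaussian θ) :=
    (hL2 i).integrable_sq.sub ((hderiv i).const_mul 2)
  have hsure (i : ι) := (hasPartialDerivOffCountable_shrinkage hc i).integral_sq_sub_isoGaussian
    (hL2 i) (hderiv i)
  rw [integral_finsetSum _ fun i _ => integrable_sq_sub_shrinkage hc.le θ i]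
  simp only [hsure, Finset.sum_add_distrib, Finset.sum_const, Finset.card_univ, nsmul_eq_mul,
    mul_one, Finset.mul_sum, ← Finset.sum_sub_distrib]
  rw [integral_finsetSum _ fun i _ => hresidual i]

theorem integral_sum_mul_shrinkage (hc : 0 < c) (θ : ι → ℝ) :
    ∫ y, ∑ i, (y i - θ i) * shrinkage c y i ∂isoGaussian θ =
      ∫ y, ∑ i, shrinkageDeriv c y i ∂isoGaussian θ := by
  classical
  have hderiv := integrable_shrinkageDeriv hc.le θ
  rw [integral_finsetSum _ fun i _ => hderiv i,
    integral_finsetSum _ fun i _ => integrable_sub_mul_shrinkage hc.le θ i]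
  exact Finset.sum_congr rfl fun i _ => (hasPartialDerivOffCountable_shrinkage hc i)
    |>.integral_mul_isoGaussian (memLp_shrinkage hc.le θ i) (hderiv i)

theorem integral_shrinkage_loss_le_card (hc : 0 < c) (hcard : c ≤ 2 * (Fintype.card ι - 2))
    (θ : ι → ℝ) :
    ∫ y, ∑ i, (θ i - (y i - shrinkage c y i)) ^ 2 ∂isoGaussian θ ≤ Fintype.card ι := by
  rw [integral_shrinkage_loss_eq hc]
  refine add_le_of_nonpos_right (integral_nonpos fun y => ?_)
  exact sub_nonpos.2 (sum_shrinkage_sq_le_two_mul_sum_shrinkageDeriv hc hcard y)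

theorem integral_shrinkage_loss_zero_le (hc : 0 < c) (hcard : c ≤ Fintype.card ι - 2) :
    ∫ y : ι → ℝ, ∑ i, (0 - (y i - shrinkage c y i)) ^ 2 ∂isoGaussian 0 ≤
      Fintype.card ι - c := by
  have hsq := integrable_finsetSum Finset.univ fun i _ =>
    (memLp_shrinkage hc.le (0 : ι → ℝ) i).integrable_sq
  have hdiv := integrable_finsetSum Finset.univ fun i _ =>
    integrable_shrinkageDeriv hc.le (0 : ι → ℝ) i
  have hcross := integrable_finsetSum Finset.univ fun i _ =>
    integrable_sub_mul_shrinkage hc.le (0 : ι → ℝ) i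
  have hstein := integral_sum_mul_shrinkage hc (0 : ι → ℝ)
  have hrisk := integral_shrinkage_loss_eq hc (0 : ι → ℝ)
  simp only [Pi.zero_apply, sub_zero] at hcross hstein hrisk
  have hbound := integral_mono (hsq.add (integrable_const c)) (hdiv.add hcross)
    (sum_shrinkage_sq_add_le hc hcard)
  rw [integral_add' hsq (integrable_const c), integral_add' hdiv hcross, hstein] at hbound
  rw [integral_sub hsq (hdiv.const_mul 2), integral_const_mul] at hrisk
  simp only [integral_const, probReal_univ, one_smul] at hrisk hbound
  linarith

end Risk

section JamesStein

variable {B : ℕ}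

lemma jamesStein_eq_sub_shrinkage (hB : 2 < B) (y : Fin B → ℝ) :
    jamesStein B y = y - shrinkage ((B : ℝ) - 2) y := by
  have hc : 0 < (B : ℝ) - 2 := sub_pos.2 (by exact_mod_cast hB)
  rw [jamesStein]
  set c := (B : ℝ) - 2
  rcases lt_or_ge c (∑ j, y j ^ 2) with hy | hy
  · have hle : c / ∑ j, y j ^ 2 ≤ 1 := (div_le_one (hc.trans hy)).2 hy.le
    rw [shrinkage_of_ge hy.le, max_eq_left (sub_nonneg.2 hle), sub_smul, one_smul]
  rw [shrinkage_of_le hc.ne' hy, sub_self]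
  rcases eq_or_ne y 0 with rfl | hy0
  · exact smul_zero _
  have hS : 0 < ∑ j, y j ^ 2 := by
    obtain ⟨i, hi⟩ := Function.ne_iff.1 hy0
    exact Finset.sum_pos' (fun j _ => sq_nonneg (y j)) ⟨i, Finset.mem_univ i, sq_pos_of_ne_zero hi⟩
  rw [max_eq_right (sub_nonpos.2 ((one_le_div hS).2 hy)), zero_smul]

@[fun_prop]
lemma measurable_jamesStein (B : ℕ) : Measurable (jamesStein B) := by
  refine measurable_pi_lambda _ fun i => ?_
  simp only [jamesStein, Pi.smul_apply, smul_eq_mul]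
  fun_prop

lemma lintegral_jamesStein_loss (hB : 2 < B) (θ : Fin B → ℝ) :
    ∫⁻ z, ENNReal.ofReal (∑ i, (θ i - jamesStein B (θ + z) i) ^ 2) ∂_root_.stdGaussian B =
      ENNReal.ofReal (∫ y, ∑ i, (θ i - (y i - shrinkage ((B : ℝ) - 2) y i)) ^ 2
        ∂isoGaussian θ) := by
  have hc : 0 ≤ (B : ℝ) - 2 := sub_nonneg.2 (by exact_mod_cast hB.le)
  rw [(measurePreserving_add_stdGaussian θ).lintegral_comp
      (f := fun y => ENNReal.ofReal (∑ i, (θ i - jamesStein B y i) ^ 2))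
      (by fun_prop),
    ofReal_integral_eq_lintegral_ofReal
      (integrable_finsetSum _ fun i _ => integrable_sq_sub_shrinkage hc θ i)
      (ae_of_all _ fun y => Finset.sum_nonneg fun i _ => sq_nonneg _)]
  simp only [jamesStein_eq_sub_shrinkage hB, Pi.sub_apply]

theorem lintegral_jamesStein_loss_le (hB : 2 < B) (θ : Fin B → ℝ) :
    ∫⁻ z, ENNReal.ofReal (∑ i, (θ i - jamesStein B (θ + z) i) ^ 2) ∂_root_.stdGaussian B ≤ B := by
  have hB' : (2 : ℝ) < B := by exact_mod_cast hB
  rw [lintegral_jamesStein_loss hB, ← ENNReal.ofReal_natCast]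
  refine ENNReal.ofReal_le_ofReal ?_
  simpa using integral_shrinkage_loss_le_card (sub_pos.2 hB')
    (by rw [Fintype.card_fin]; linarith) θ

theorem lintegral_jamesStein_loss_zero_le (hB : 2 < B) :
    ∫⁻ z, ENNReal.ofReal (∑ i, ((0 : Fin B → ℝ) i - jamesStein B (0 + z) i) ^ 2)
      ∂_root_.stdGaussian B ≤ 2 := by
  have hB' : (2 : ℝ) < B := by exact_mod_cast hB
  rw [lintegral_jamesStein_loss hB, ← ENNReal.ofReal_ofNat]
  refine ENNReal.ofReal_le_ofReal ?_
  simpa using integral_shrinkage_loss_zero_le (ι := Fin B) (sub_pos.2 hB') (by simp)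

theorem lintegral_prod_jamesStein_loss_le (hB : 2 < B) (ν : Measure (Fin B → ℝ)) :
    ∫⁻ p, ENNReal.ofReal (∑ i, (p.1 i - jamesStein B (p.1 + p.2) i) ^ 2)
      ∂(ν.prod (_root_.stdGaussian B)) ≤ 2 * ν {0} + B * ν {0}ᶜ := by
  have : SFinite (_root_.stdGaussian B) := inferInstanceAs (SFinite (Measure.pi _))
  have hmeas : Measurable fun p : (Fin B → ℝ) × (Fin B → ℝ) =>
      ENNReal.ofReal (∑ i, (p.1 i - jamesStein B (p.1 + p.2) i) ^ 2) := by
    fun_prop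
  rw [lintegral_prod _ hmeas.aemeasurable,
    ← lintegral_add_compl _ (measurableSet_singleton (0 : Fin B → ℝ)),
    lintegral_singleton]
  refine add_le_add (mul_le_mul_left (lintegral_jamesStein_loss_zero_le hB) _) ?_
  rw [← setLIntegral_const]
  exact lintegral_mono fun x => lintegral_jamesStein_loss_le hB x

lemma measure_compl_zero_le_of_mem_sparseClass {ε : ℝ} {ν : Measure (Fin B → ℝ)}
    (hν : ν ∈ sparseClass B ε) : ν {0}ᶜ ≤ ENNReal.ofReal ε := by
  obtain ⟨_, hzero⟩ := hν
  refine (prob_compl_le_one_sub_of_le_prob hzero (measurableSet_singleton 0)).trans ?_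
  rw [tsub_le_iff_right]
  simpa using ENNReal.ofReal_add_le (p := ε) (q := 1 - ε)

end JamesStein

/-- **James–Stein minimax MSE bound.** For `B > 2`,
`M_B(ε|JamesStein) = (1/B) sup_{ν ∈ F_{ε,B}} E ‖X − η^JS(X+Z)‖₂² ≤ ε + 2/B`,
with `X ∼ ν` and `Z ∼ N(0,I_B)` independent. -/
theorem jamesStein_minimax_bound (B : ℕ) (hB : 2 < B)
    (ε : ℝ) (hε0 : 0 ≤ ε) (hε1 : ε ≤ 1) :
    (B : ℝ≥0∞)⁻¹ *
      ⨆ ν ∈ sparseClass B ε,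
        ∫⁻ p, ENNReal.ofReal (∑ i, (p.1 i - jamesStein B (p.1 + p.2) i) ^ 2)
          ∂(ν.prod (stdGaussian B))
    ≤ ENNReal.ofReal (ε + 2 / B) := by
  have hB_pos : (0 : ℝ) < B := by exact_mod_cast two_pos.trans hB
  have hbound : ENNReal.ofReal (ε + 2 / B) = (B : ℝ≥0∞)⁻¹ * (2 + B * ENNReal.ofReal ε) := by
    rw [← ENNReal.ofReal_natCast, ← ENNReal.ofReal_inv_of_pos hB_pos, ← ENNReal.ofReal_ofNat,
      ← ENNReal.ofReal_mul hB_pos.le, ← ENNReal.ofReal_add zero_le_two (by positivity),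
      ← ENNReal.ofReal_mul (by positivity)]
    congr 1
    field_simp
    ring
  rw [hbound]
  gcongr
  refine iSup₂_le fun ν hν => (lintegral_prod_jamesStein_loss_le hB ν).trans ?_
  have : IsProbabilityMeasure ν := hν.1
  gcongr
  · exact mul_le_of_le_one_right' prob_le_one
  · exact measure_compl_zero_le_of_mem_sparseClass hν
end
end
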